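/- arXiv:2112.15175 — 5 statements merged into one kernel-verified Lean document; each statement's English description precedes it below -/
import Mathlib

section
/- For every m ≥ 1, every continuous function z : ℝ^m → ℂ with ‖z(x)‖ ≤ 1 for all x ∈ I_m, and every ε > 0, there exist N ∈ ℕ and parameters ω_1, …, ω_N ∈ ℝ^m and α_1, …, α_N, φ_1, …, φ_N ∈ ℝ such that for every x ∈ I_m one has ‖z(x) − ⟨1| U^{UAT}(x; ω_N, α_N, φ_N) · ⋯ · U^{UAT}(x; ω_1, α_1, φ_1) |0⟩‖ < ε. -/
/-!
Identify `SU(2)` with the unit quaternions (`rho`), so that circuits become finite products in the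
Banach algebra `C([0,1]^m, ℍ)` of `x ↦ exp ((ω·x + α) i) * exp (φ j)`, and let `S` be the closure
of the monoid they form. The idea is to compute the Lie algebra `L` of `S`, that is, the `X` with
`exp (t X) ∈ S` for all real `t`. It is a closed real vector space by the Lie–Trotter formula
(`trotter`, `lieOf`), and stable under conjugation by `exp Z` for `Z ∈ L`.

By construction `L` contains `(ω·x + α) i` and `j`. If `f i` and `g j` are in `L`, conjugating `g j`
by `exp (± f i)` shows that `g sin (2f) k` is in `L` (`along_mul_sin_mem`), and the constant
`f = π/4` turns `k` back into `-j`. So the closed space of `g` with `g j ∈ L` contains `1` and is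
stable under multiplication by `sin (2(ω·x + α))`. These functions separate the points of the cube,
so by Stone–Weierstrass this space contains all continuous `g` (`along_mem_of_separates`), and
likewise for `k`.

Finally, a point `w` of the open unit disc is the `(1,0)` entry of `exp (u k) exp (v j) exp (u k)`
for angles `u`, `v` depending continuously on `w` (`entry_identity`). Hence every continuous function
into the open disc is exactly the entry of an element of `S`, and `z` is a uniform limit of the
functions `(1 - δ) z`, which take values there.
-/

open scoped Matrix

/-- Single-qubit rotation about the y-axis. -/
noncomputable def Ry (θ : ℝ) : Matrix (Fin 2) (Fin 2) ℂ :=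
  !![(Real.cos (θ / 2) : ℂ), -(Real.sin (θ / 2) : ℂ);
     (Real.sin (θ / 2) : ℂ), (Real.cos (θ / 2) : ℂ)]

/-- Single-qubit rotation about the z-axis. -/
noncomputable def Rz (θ : ℝ) : Matrix (Fin 2) (Fin 2) ℂ :=
  !![Complex.exp (Complex.I * (θ / 2)), 0;
     0, Complex.exp (-(Complex.I * (θ / 2)))]

/-- The fundamental UAT gate `U^{UAT}(x; ω, α, φ) = R_z(2(ω·x + α)) · R_y(2φ)`. -/
noncomputable def Uuat {m : ℕ} (x ω : Fin m → ℝ) (α φ : ℝ) : Matrix (Fin 2) (Fin 2) ℂ :=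
  Rz (2 * ((∑ i, ω i * x i) + α)) * Ry (2 * φ)

/-- The ordered product `f (n-1) * ⋯ * f 1 * f 0`. -/
noncomputable def prodRev {n : ℕ} (f : Fin n → Matrix (Fin 2) (Fin 2) ℂ) :
    Matrix (Fin 2) (Fin 2) ℂ :=
  (List.ofFn fun j => f j.rev).prod

/-! ### The Lie algebra of a closed submonoid of a Banach algebra -/

section Trotter
open NormedSpace Filter Topology

lemma norm_pow_sub_pow_le_of_norm_le {𝔸 : Type*} [NormedRing 𝔸] [NormOneClass 𝔸]
    {a b : 𝔸} {C : ℝ} (hC : 1 ≤ C) (ha : ‖a‖ ≤ C) (hb : ‖b‖ ≤ C) (n : ℕ) : ‖a ^ n - b ^ n‖ ≤ n * C ^ n * ‖a - b‖ := by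
  induction n with
  | zero => simp
  | succ n ih =>
    have hbn : ‖b ^ n‖ ≤ C ^ n := (norm_pow_le _ _).trans (by gcongr)
    have hCn : C ^ n ≤ C ^ (n + 1) := pow_le_pow_right₀ hC n.le_succ
    calc ‖a ^ (n + 1) - b ^ (n + 1)‖ = ‖a * (a ^ n - b ^ n) + (a - b) * b ^ n‖ := by
          congr 1; simp only [pow_succ']; noncomm_ring
      _ ≤ ‖a‖ * ‖a ^ n - b ^ n‖ + ‖a - b‖ * ‖b ^ n‖ :=
          (norm_add_le _ _).trans (add_le_add (norm_mul_le _ _) (norm_mul_le _ _))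
      _ ≤ C * (n * C ^ n * ‖a - b‖) + ‖a - b‖ * C ^ (n + 1) := by
          gcongr; exact hbn.trans hCn
      _ = ((n + 1 : ℕ) : ℝ) * C ^ (n + 1) * ‖a - b‖ := by push_cast; ring

variable {𝔸 : Type*} [NormedRing 𝔸] [NormedAlgebra ℝ 𝔸]

lemma norm_exp_le_real [NormOneClass 𝔸] (x : 𝔸) : ‖exp x‖ ≤ Real.exp ‖x‖ := by
  rw [exp_eq_tsum ℝ, Real.exp_eq_exp_ℝ, exp_eq_tsum ℝ]
  refine (norm_tsum_le_tsum_norm (norm_expSeries_summable' x)).trans ?_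
  refine Summable.tsum_le_tsum (fun n => ?_) (norm_expSeries_summable' x)
    (expSeries_summable' (𝕂 := ℝ) ‖x‖)
  rw [norm_smul, smul_eq_mul, Real.norm_of_nonneg (by positivity)]
  gcongr
  exact norm_pow_le _ _

variable [CompleteSpace 𝔸]

/-- The Lie–Trotter product formula. Both `s ↦ exp (s X) exp (s Y)` and `s ↦ exp (s (X + Y))` have
derivative `X + Y` at `0`, so at `s = 1 / n` they differ by `o(1 / n)`; taking `n`-th powers
multiplies this error by at most `n * exp (‖X‖ + ‖Y‖)`. -/
lemma trotter [NormOneClass 𝔸] (X Y : 𝔸) :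
    Tendsto (fun n : ℕ => (exp ((n : ℝ)⁻¹ • X) * exp ((n : ℝ)⁻¹ • Y)) ^ n) atTop
      (𝓝 (exp (X + Y))) := by
  let _ : NormedAlgebra ℚ 𝔸 := NormedAlgebra.restrictScalars ℚ ℝ 𝔸
  have hd (Z : 𝔸) : HasDerivAt (fun s : ℝ => exp (s • Z)) Z 0 := by
    simpa using hasDerivAt_exp_smul_const (𝕂 := ℝ) Z (0 : ℝ)
  have h := ((hd X).mul (hd Y)).sub (hd (X + Y))
  rw [hasDerivAt_iff_tendsto_slope_zero] at h
  have hinv : Tendsto (fun n : ℕ => (n : ℝ)⁻¹) atTop (𝓝[≠] 0) := by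
    refine tendsto_nhdsWithin_iff.2 ⟨tendsto_inv_atTop_nhds_zero_nat, ?_⟩
    filter_upwards [eventually_ne_atTop 0] with n hn
    simpa using hn
  have h2 := (h.comp hinv).norm.const_mul (Real.exp (‖X‖ + ‖Y‖))
  simp only [zero_smul, exp_zero, mul_one, one_mul, sub_self, norm_zero, mul_zero] at h2
  rw [tendsto_iff_norm_sub_tendsto_zero]
  refine squeeze_zero' (Eventually.of_forall fun _ => norm_nonneg _) ?_ h2
  filter_upwards [eventually_ne_atTop 0] with n hn
  have hn' : (n : ℝ) ≠ 0 := by exact_mod_cast hn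
  have hpow : exp (X + Y) = exp ((n : ℝ)⁻¹ • (X + Y)) ^ n := by
    rw [← exp_nsmul, ← Nat.cast_smul_eq_nsmul ℝ, smul_smul, mul_inv_cancel₀ hn', one_smul]
  set C := Real.exp ((n : ℝ)⁻¹ * (‖X‖ + ‖Y‖)) with hC
  have hC1 : 1 ≤ C := Real.one_le_exp (by positivity)
  have hCn : C ^ n = Real.exp (‖X‖ + ‖Y‖) := by
    rw [hC, ← Real.exp_nat_mul, mul_inv_cancel_left₀ hn']
  have hs (Z : 𝔸) : ‖(n : ℝ)⁻¹ • Z‖ = (n : ℝ)⁻¹ * ‖Z‖ := by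
    rw [norm_smul, Real.norm_of_nonneg (by positivity)]
  rw [hpow]
  refine (norm_pow_sub_pow_le_of_norm_le hC1 ?_ ?_ n).trans ?_
  · refine (norm_mul_le _ _).trans ?_
    rw [hC, mul_add, Real.exp_add, ← hs, ← hs]
    gcongr <;> exact norm_exp_le_real _
  · refine (norm_exp_le_real _).trans ?_
    rw [hC, hs]
    gcongr
    exact norm_add_le _ _
  · rw [hCn]
    simp [norm_smul]
    apply le_of_eq; ring

/-- The Lie algebra of a closed submonoid `S` of a Banach algebra: all `X` whose whole
one-parameter group `t ↦ exp (t X)`, negative `t` included, lies in `S`. Closure under addition is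
the Lie–Trotter formula. -/
def lieOf [NormOneClass 𝔸] (S : Submonoid 𝔸) (hS : IsClosed (S : Set 𝔸)) : Submodule ℝ 𝔸 where
  carrier := {X | ∀ t : ℝ, exp (t • X) ∈ S}
  zero_mem' t := by simp
  add_mem' {X Y} hX hY t := by
    rw [smul_add]
    refine hS.mem_of_tendsto (trotter (t • X) (t • Y)) (Eventually.of_forall fun n => ?_)
    simp only [smul_smul]
    exact pow_mem (mul_mem (hX _) (hY _)) n
  smul_mem' c X hX t := by
    rw [smul_smul]; exact hX _

variable [NormOneClass 𝔸] {S : Submonoid 𝔸} {hS : IsClosed (S : Set 𝔸)}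

lemma isClosed_lieOf : IsClosed (lieOf S hS : Set 𝔸) := by
  let _ : NormedAlgebra ℚ 𝔸 := NormedAlgebra.restrictScalars ℚ ℝ 𝔸
  have : (lieOf S hS : Set 𝔸) = ⋂ t : ℝ, (fun X : 𝔸 => exp (t • X)) ⁻¹' S := by
    ext; simp [lieOf]
  rw [this]
  exact isClosed_iInter fun t => hS.preimage (exp_continuous.comp (continuous_const_smul t))

lemma conj_mem_lieOf {Z X : 𝔸} (hZ : Z ∈ lieOf S hS) (hX : X ∈ lieOf S hS) :
    exp Z * X * exp (-Z) ∈ lieOf S hS := by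
  let _ : NormedAlgebra ℚ 𝔸 := NormedAlgebra.restrictScalars ℚ ℝ 𝔸
  intro t
  have h1 : exp Z * exp (-Z) = 1 := by
    rw [← exp_add_of_commute (Commute.refl Z).neg_right]; simp
  have h2 : exp (-Z) * exp Z = 1 := by
    rw [← exp_add_of_commute (Commute.refl Z).neg_left]; simp
  have := exp_units_conj ⟨exp Z, exp (-Z), h1, h2⟩ (t • X)
  simp only [mul_smul_comm, smul_mul_assoc, Units.val_mk, Units.inv_mk] at this
  rw [this]
  refine mul_mem (mul_mem ?_ (hX t)) ?_
  · simpa using hZ 1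
  · simpa using hZ (-1)
end Trotter

/-! ### Functions valued along anticommuting square roots of `-1` -/

section Quaternionic
open NormedSpace
variable {B : Type*} [NormedRing B] [NormedAlgebra ℝ B]

/-- Euler's formula for a square root `J` of `-1`, transported along the algebra map `ℂ → B` that
sends the imaginary unit to `J`. -/
lemma exp_smul_of_mul_self {J : B} (hJ : J * J = -1) (t : ℝ) :
    exp (t • J) = Real.cos t • (1 : B) + Real.sin t • J := by
  let _ : NormedAlgebra ℚ B := NormedAlgebra.restrictScalars ℚ ℝ B
  have hc : Continuous (Complex.liftAux J hJ) :=
    LinearMap.continuous_of_finiteDimensional (Complex.liftAux J hJ).toLinearMap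
  have h := map_exp (Complex.liftAux J hJ) hc ((t : ℂ) * Complex.I)
  rw [← Complex.exp_eq_exp_ℂ] at h
  simpa [Complex.liftAux_apply, Complex.exp_re, Complex.exp_im, Algebra.algebraMap_eq_smul_one]
    using h.symm

/-- The function `x ↦ f x • J`, as a continuous linear map in `f`. -/
noncomputable def along (K : Type*) [TopologicalSpace K] (J : B) : C(K, ℝ) →L[ℝ] C(K, B) :=
  (ContinuousLinearMap.toSpanSingleton ℝ J).compLeftContinuous ℝ K

@[simp] lemma along_apply {K : Type*} [TopologicalSpace K] (J : B) (f : C(K, ℝ)) (x : K) : along K J f x = f x • J := rfl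

variable {K : Type*} [TopologicalSpace K] [CompactSpace K]

lemma exp_along_apply [CompleteSpace B] {J : B} (hJ : J * J = -1) (f : C(K, ℝ)) (x : K) :
    exp (along K J f) x = Real.cos (f x) • (1 : B) + Real.sin (f x) • J := by
  let _ : NormedAlgebra ℚ B := NormedAlgebra.restrictScalars ℚ ℝ B
  let ev : C(K, B) →+* B :=
    { toFun := fun F => F x, map_one' := rfl, map_mul' := fun _ _ => rfl, map_zero' := rfl,
      map_add' := fun _ _ => rfl }
  let _ : NormedAlgebra ℚ C(K, B) := NormedAlgebra.restrictScalars ℚ ℝ C(K, B)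
  have h := map_exp ev (ContinuousEvalConst.continuous_eval_const x) (along K J f)
  exact h.trans (exp_smul_of_mul_self hJ (f x))

/-- `x ↦ sin (2 f x)`. -/
noncomputable def sinTwo {K : Type*} [TopologicalSpace K] (f : C(K, ℝ)) : C(K, ℝ) := ⟨fun x => Real.sin (2 * f x), by fun_prop⟩

variable [Nonempty K] [CompleteSpace B] [NormOneClass B]
  {S : Submonoid C(K, B)} {hS : IsClosed (S : Set C(K, B))}

/-- Conjugating `g J₂` by `exp (± f J₁)` rotates it to `g (cos 2f J₂ ± sin 2f J₁J₂)`; half the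
difference of the two conjugates is `g sin 2f J₁J₂`. -/
lemma along_mul_sin_mem {J₁ J₂ : B} (h₁ : J₁ * J₁ = -1) (h : J₂ * J₁ = -(J₁ * J₂))
    {f g : C(K, ℝ)} (hf : along K J₁ f ∈ lieOf S hS) (hg : along K J₂ g ∈ lieOf S hS) :
    along K (J₁ * J₂) (g * sinTwo f) ∈ lieOf S hS := by
  have hp := conj_mem_lieOf hf hg
  have hm := conj_mem_lieOf (neg_mem hf) hg
  have key : along K (J₁ * J₂) (g * sinTwo f) = (1 / 2 : ℝ) •
      (exp (along K J₁ f) * along K J₂ g * exp (-along K J₁ f)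
        - exp (-along K J₁ f) * along K J₂ g * exp (- -along K J₁ f)) := by
    ext x
    have hr : J₁ * J₂ * J₁ = J₂ := by
      rw [mul_assoc, h, mul_neg, ← mul_assoc, h₁]; simp
    simp only [neg_neg, ← map_neg, ContinuousMap.smul_apply, ContinuousMap.sub_apply,
      ContinuousMap.mul_apply, exp_along_apply h₁, along_apply, ContinuousMap.neg_apply,
      Real.cos_neg, Real.sin_neg, sinTwo, ContinuousMap.coe_mk, Real.sin_two_mul]
    simp only [add_mul, mul_add, smul_mul_assoc, mul_smul_comm, one_mul, mul_one, h, hr, smul_smul,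
      smul_add, smul_sub, smul_neg]
    module
  rw [key]
  exact Submodule.smul_mem _ _ (sub_mem hp hm)

/-- If the Lie algebra contains `J₂`, and contains `f J₁` for `f = π / 4` and for enough functions
`f` that the `sin 2f` separate points, then it contains `g J₂` and `g J₁J₂` for every continuous `g`.
The `g` with `g J₂` in the Lie algebra form a closed space, which the multiplier algebra of that
space embeds into because it contains `1`; the multipliers are dense by Stone–Weierstrass. -/
lemma along_mem_of_separates {J₁ J₂ : B} (h₁ : J₁ * J₁ = -1) (h : J₂ * J₁ = -(J₁ * J₂))
    (hq : along K J₁ (ContinuousMap.const K (Real.pi / 4)) ∈ lieOf S hS)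
    (hone : along K J₂ 1 ∈ lieOf S hS)
    (hsep : ∀ x y : K, x ≠ y → ∃ f : C(K, ℝ), along K J₁ f ∈ lieOf S hS ∧
      Real.sin (2 * f x) ≠ Real.sin (2 * f y)) (g : C(K, ℝ)) :
    along K J₂ g ∈ lieOf S hS ∧ along K (J₁ * J₂) g ∈ lieOf S hS := by
  have hsin : sinTwo (ContinuousMap.const K (Real.pi / 4)) = 1 := by
    ext x
    simp [sinTwo, show 2 * (Real.pi / 4) = Real.pi / 2 by ring]
  -- With `f = π / 4` the factor `sin 2f` is `1`: this turns `J` into `J₁ * J` without altering `g`.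
  have hrot {J : B} (hJ : J * J₁ = -(J₁ * J)) {g : C(K, ℝ)} (hg : along K J g ∈ lieOf S hS) :
      along K (J₁ * J) g ∈ lieOf S hS := by
    simpa [hsin] using along_mul_sin_mem h₁ hJ hq hg
  let F : Submodule ℝ C(K, ℝ) := (lieOf S hS).comap (along K J₂).toLinearMap
  have hF : IsClosed (F : Set C(K, ℝ)) := (isClosed_lieOf (S := S) (hS := hS)).preimage (along K J₂).continuous
  have hmul {f g : C(K, ℝ)} (hf : along K J₁ f ∈ lieOf S hS) (hg : g ∈ F) :
      sinTwo f * g ∈ F := by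
    have h12 : J₁ * J₂ * J₁ = -(J₁ * (J₁ * J₂)) := by
      rw [mul_assoc, h, mul_neg]
    have h3 := hrot h12 (along_mul_sin_mem h₁ h hf hg)
    have h4 : along K (J₁ * (J₁ * J₂)) (g * sinTwo f) = - along K J₂ (sinTwo f * g) := by
      ext x
      simp [← mul_assoc, h₁, mul_comm]
    rw [h4] at h3
    exact (neg_mem_iff (x := along K J₂ (sinTwo f * g))).1 h3
  -- The multiplier algebra of `F`.
  let A : Subalgebra ℝ C(K, ℝ) :=
    { carrier := {a | ∀ g ∈ F, a * g ∈ F}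
      mul_mem' := fun {a b} ha hb g hg => by rw [mul_assoc]; exact ha _ (hb _ hg)
      add_mem' := fun {a b} ha hb g hg => by rw [add_mul]; exact add_mem (ha _ hg) (hb _ hg)
      algebraMap_mem' := fun r g hg => by
        rw [← Algebra.smul_def]; exact F.smul_mem r hg }
  have hA : A.SeparatesPoints := by
    intro x y hxy
    obtain ⟨f, hf, hne⟩ := hsep x y hxy
    exact ⟨sinTwo f, ⟨sinTwo f, fun g hg => hmul hf hg, rfl⟩, hne⟩
  have hAF : (A : Set C(K, ℝ)) ⊆ F := fun a ha => by simpa using ha 1 hone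
  have hg : g ∈ F := by
    have : g ∈ A.topologicalClosure := by
      rw [ContinuousMap.subalgebra_topologicalClosure_eq_top_of_separatesPoints A hA]
      trivial
    exact closure_minimal hAF hF this
  exact ⟨hg, hrot h hg⟩

end Quaternionic

/-! ### Unit quaternions and the gates -/

section Gates
open NormedSpace
open scoped Quaternion

/-- The standard representation of the quaternions by complex `2 × 2` matrices, normalised so that
`i` and `j` generate the rotations `Rz` and `Ry`. Gates are handled as quaternions, whose norm is
multiplicative. -/
def rho (q : ℍ[ℝ]) : Matrix (Fin 2) (Fin 2) ℂ :=
  !![⟨q.re, q.imI⟩, ⟨-q.imJ, -q.imK⟩; ⟨q.imJ, -q.imK⟩, ⟨q.re, -q.imI⟩]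

lemma rho_one : rho 1 = 1 := by
  ext i j; fin_cases i <;> fin_cases j <;> simp [rho, Complex.ext_iff]

lemma rho_mul (p q : ℍ[ℝ]) : rho (p * q) = rho p * rho q := by
  ext i j
  fin_cases i <;> fin_cases j <;> simp [rho, Matrix.mul_apply, Complex.ext_iff] <;>
    constructor <;> ring

lemma continuous_rho_entry : Continuous fun q : ℍ[ℝ] => rho q 1 0 := by
  have : (fun q : ℍ[ℝ] => rho q 1 0) = fun q => (q.imJ : ℂ) - q.imK * Complex.I := by
    ext q; simp [rho, Complex.ext_iff]
  rw [this]
  exact (Complex.continuous_ofReal.comp Quaternion.continuous_imJ).sub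
    ((Complex.continuous_ofReal.comp Quaternion.continuous_imK).mul continuous_const)

/-- The quaternion unit `i`. -/
def qi : ℍ[ℝ] := ⟨0, 1, 0, 0⟩

@[simp] lemma qi_parts : qi.re = 0 ∧ qi.imI = 1 ∧ qi.imJ = 0 ∧ qi.imK = 0 := ⟨rfl, rfl, rfl, rfl⟩

/-- The quaternion unit `j`. -/
def qj : ℍ[ℝ] := ⟨0, 0, 1, 0⟩

@[simp] lemma qj_parts : qj.re = 0 ∧ qj.imI = 0 ∧ qj.imJ = 1 ∧ qj.imK = 0 := ⟨rfl, rfl, rfl, rfl⟩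

lemma qi_mul_self : qi * qi = -1 := by ext <;> simp

lemma qj_mul_self : qj * qj = -1 := by ext <;> simp

lemma qj_mul_qi : qj * qi = -(qi * qj) := by ext <;> simp

lemma qk_mul_self : (qi * qj) * (qi * qj) = -1 := by ext <;> simp

lemma Ry_two_mul (φ : ℝ) : Ry (2 * φ) = rho (Real.cos φ • 1 + Real.sin φ • qj) := by
  ext i j
  fin_cases i <;> fin_cases j <;>
    simp [Ry, rho, Complex.ext_iff, -Complex.ofReal_cos, -Complex.ofReal_sin]

lemma Rz_two_mul (t : ℝ) : Rz (2 * t) = rho (Real.cos t • 1 + Real.sin t • qi) := by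
  ext i j
  fin_cases i <;> fin_cases j <;>
    simp [Rz, rho, Complex.ext_iff, Complex.exp_re, Complex.exp_im]

variable {m : ℕ}

/-- The cube `[0,1]^m`. -/
abbrev Cube (m : ℕ) := Set.Icc (0 : Fin m → ℝ) 1

/-- The function `x ↦ ω·x + α` on the cube. -/
noncomputable def affine (ω : Fin m → ℝ) (α : ℝ) : C(Cube m, ℝ) :=
  ⟨fun x => (∑ i, ω i * x.1 i) + α,
    (continuous_finsetSum _ fun i _ => continuous_const.mul
      ((continuous_apply i).comp continuous_subtype_val)).add continuous_const⟩

/-- The UAT gate with parameters `p = (ω, α, φ)`, as a function from the cube to the unit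
quaternions. -/
noncomputable def gate (p : (Fin m → ℝ) × ℝ × ℝ) : C(Cube m, ℍ[ℝ]) :=
  ⟨fun x => (Real.cos (affine p.1 p.2.1 x) • 1 + Real.sin (affine p.1 p.2.1 x) • qi) *
    (Real.cos p.2.2 • 1 + Real.sin p.2.2 • qj), by fun_prop⟩

lemma rho_gate (p : (Fin m → ℝ) × ℝ × ℝ) (x : Cube m) :
    rho (gate p x) = Uuat x.1 p.1 p.2.1 p.2.2 := by
  simp only [Uuat, Rz_two_mul, Ry_two_mul, ← rho_mul]
  rfl

/-- Uniform limits on the cube of finite products of gates. -/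
noncomputable def circuits (m : ℕ) : Submonoid C(Cube m, ℍ[ℝ]) :=
  (Submonoid.closure (Set.range gate)).topologicalClosure

lemma isClosed_circuits : IsClosed (circuits m : Set C(Cube m, ℍ[ℝ])) :=
  Submonoid.isClosed_topologicalClosure _

lemma prodRev_snoc {n : ℕ} (f : Fin n → Matrix (Fin 2) (Fin 2) ℂ) (a : Matrix (Fin 2) (Fin 2) ℂ) :
    prodRev (Fin.snoc f a : Fin (n + 1) → Matrix (Fin 2) (Fin 2) ℂ) = a * prodRev f := by
  simp [prodRev, List.ofFn_succ, Fin.rev_succ]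

lemma exists_of_mem_closure {F : C(Cube m, ℍ[ℝ])}
    (hF : F ∈ Submonoid.closure (Set.range (gate (m := m)))) :
    ∃ (N : ℕ) (ω : Fin N → Fin m → ℝ) (α φ : Fin N → ℝ),
      ∀ x, rho (F x) = prodRev fun j => Uuat x.1 (ω j) (α j) (φ j) := by
  induction hF using Submonoid.closure_induction_left with
  | one => exact ⟨0, Fin.elim0, Fin.elim0, Fin.elim0, fun x => by simp [prodRev, rho_one]⟩
  | mul_left a ha G hG ih =>
    obtain ⟨p, rfl⟩ := ha
    obtain ⟨N, ω, α, φ, h⟩ := ih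
    refine ⟨N + 1, Fin.snoc ω p.1, Fin.snoc α p.2.1, Fin.snoc φ p.2.2, fun x => ?_⟩
    have : (fun j : Fin (N + 1) => Uuat x.1 ((Fin.snoc ω p.1 : Fin (N + 1) → Fin m → ℝ) j)
        ((Fin.snoc α p.2.1 : Fin (N + 1) → ℝ) j) ((Fin.snoc φ p.2.2 : Fin (N + 1) → ℝ) j)) =
        Fin.snoc (fun j => Uuat x.1 (ω j) (α j) (φ j)) (rho (gate p x)) := by
      funext j
      refine Fin.lastCases ?_ (fun i => ?_) j
      · simp [rho_gate]
      · simp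
    rw [this, prodRev_snoc, ← h, ← rho_mul]
    rfl

instance : Nonempty (Cube m) := ⟨⟨0, by simp⟩⟩

lemma gate_mem (p : (Fin m → ℝ) × ℝ × ℝ) : gate p ∈ circuits m :=
  Submonoid.le_topologicalClosure _ (Submonoid.subset_closure ⟨p, rfl⟩)

lemma along_qi_mem (ω : Fin m → ℝ) (α : ℝ) :
    along (Cube m) qi (affine ω α) ∈ lieOf (circuits m) isClosed_circuits := by
  intro t
  have : exp (t • along (Cube m) qi (affine ω α)) = gate (t • ω, t * α, 0) := by
    rw [← map_smul]
    ext1 x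
    rw [exp_along_apply qi_mul_self]
    simp [gate, affine, Finset.mul_sum, mul_add, mul_assoc]
  rw [this]
  exact gate_mem _

lemma along_qj_one_mem : along (Cube m) qj 1 ∈ lieOf (circuits m) isClosed_circuits := by
  intro t
  have : exp (t • along (Cube m) qj 1) = gate (0, 0, t) := by
    rw [← map_smul]
    ext1 x
    rw [exp_along_apply qj_mul_self]
    simp [gate, affine]
  rw [this]
  exact gate_mem _

lemma along_qj_qk_mem (g : C(Cube m, ℝ)) :
    along (Cube m) qj g ∈ lieOf (circuits m) isClosed_circuits ∧
      along (Cube m) (qi * qj) g ∈ lieOf (circuits m) isClosed_circuits := by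
  refine along_mem_of_separates qi_mul_self qj_mul_qi ?_ along_qj_one_mem ?_ g
  · convert along_qi_mem 0 (Real.pi / 4) using 2
    ext x; simp [affine]
  · intro x y hxy
    obtain ⟨i, hi⟩ : ∃ i, x.1 i ≠ y.1 i := by
      by_contra! h
      exact hxy (Subtype.ext (funext h))
    refine ⟨_, along_qi_mem (Pi.single i (1 / 2)) 0, fun h => hi ?_⟩
    have hval (z : Cube m) : 2 * affine (Pi.single i (1 / 2)) 0 z = z.1 i := by
      simp [affine, Pi.single_apply]
    rw [hval, hval] at h
    have hI (z : Cube m) : z.1 i ∈ Set.Icc (-(Real.pi / 2)) (Real.pi / 2) := by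
      have h0 := z.2.1 i
      have h1 := z.2.2 i
      simp only [Pi.zero_apply, Pi.one_apply] at h0 h1
      constructor <;> linarith [Real.pi_gt_three]
    exact Real.injOn_sin (hI x) (hI y) h

/-- Every `w` in the open unit disc is the `(1,0)` entry of `exp (u k) exp (v j) exp (u k)`. Since `k`
and `j` anticommute, this product is `cos v exp (2 u k) + sin v j`, with `(1,0)` entry
`sin v - i cos v sin 2u`. The angles are continuous in `w` because `(re w)² < 1`. -/
lemma entry_identity {w : ℂ} (hw : ‖w‖ < 1) :
    let r := Real.sqrt (1 - w.re ^ 2)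
    let u := -(Real.arcsin (w.im / r) / 2)
    let v := Real.arcsin w.re
    rho ((Real.cos u • 1 + Real.sin u • (qi * qj)) * (Real.cos v • 1 + Real.sin v • qj) *
      (Real.cos u • 1 + Real.sin u • (qi * qj))) 1 0 = w := by
  intro r u v
  have hsq : w.re ^ 2 + w.im ^ 2 < 1 := by
    have := Complex.sq_norm w
    rw [Complex.normSq_apply] at this
    nlinarith [norm_nonneg w]
  have hr : 0 < r := Real.sqrt_pos.2 (by nlinarith)
  have hr2 : r ^ 2 = 1 - w.re ^ 2 := Real.sq_sqrt (by nlinarith)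
  have hre : |w.re| ≤ 1 := (Complex.abs_re_le_norm w).trans hw.le
  have him : |w.im / r| ≤ 1 := by
    rw [abs_div, abs_of_pos hr, div_le_one hr]
    exact abs_le_of_sq_le_sq (by nlinarith) hr.le
  have hsv : Real.sin v = w.re := Real.sin_arcsin (abs_le.1 hre).1 (abs_le.1 hre).2
  have hcv : Real.cos v = r := Real.cos_arcsin _
  have hsu : 2 * Real.sin u * Real.cos u = -(w.im / r) := by
    rw [← Real.sin_two_mul, show 2 * u = -Real.arcsin (w.im / r) by simp only [u]; ring,
      Real.sin_neg, Real.sin_arcsin (abs_le.1 him).1 (abs_le.1 him).2]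
  have hcs := Real.sin_sq_add_cos_sq u
  have him' : Real.cos v * (2 * Real.sin u * Real.cos u) = -w.im := by
    rw [hsu, hcv]; field_simp
  generalize Real.sin u = s at *
  generalize Real.cos u = c at *
  generalize Real.cos v = d at *
  generalize Real.sin v = e at *
  apply Complex.ext
  · simp [rho]
    rw [← hsv]; linear_combination e * hcs
  · simp [rho]
    linear_combination - him'

lemma exists_circuit_entry (w : C(Cube m, ℂ)) (hw : ∀ x, ‖w x‖ < 1) :
    ∃ F ∈ circuits m, ∀ x, rho (F x) 1 0 = w x := by
  have hr (x : Cube m) : Real.sqrt (1 - (w x).re ^ 2) ≠ 0 := by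
    refine (Real.sqrt_pos.2 ?_).ne'
    have := (Complex.abs_re_le_norm (w x)).trans_lt (hw x)
    rw [← sq_lt_one_iff_abs_lt_one] at this
    linarith
  let u : C(Cube m, ℝ) :=
    ⟨fun x => -(Real.arcsin ((w x).im / Real.sqrt (1 - (w x).re ^ 2)) / 2),
      by fun_prop (disch := assumption)⟩
  let v : C(Cube m, ℝ) := ⟨fun x => Real.arcsin (w x).re, by fun_prop⟩
  have hu : exp (along (Cube m) (qi * qj) u) ∈ circuits m := by
    simpa using (along_qj_qk_mem u).2 1
  have hv : exp (along (Cube m) qj v) ∈ circuits m := by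
    simpa using (along_qj_qk_mem v).1 1
  refine ⟨_, mul_mem (mul_mem hu hv) hu, fun x => ?_⟩
  simp only [ContinuousMap.mul_apply, exp_along_apply qk_mul_self, exp_along_apply qj_mul_self]
  exact entry_identity (hw x)

end Gates

/-! ### Approximation -/

/-- **Quantum UAT.** Any continuous `z : ℝ^m → ℂ` bounded by 1 on the cube `I_m = [0,1]^m`
can be uniformly approximated on `I_m` by `⟨1| U^{UAT}(x;θ_N) ⋯ U^{UAT}(x;θ_1) |0⟩`. -/
theorem quantum_UAT (m : ℕ) (hm : 1 ≤ m) (z : (Fin m → ℝ) → ℂ)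
    (hz : Continuous z)
    (hbound : ∀ x : Fin m → ℝ, (∀ i, x i ∈ Set.Icc (0 : ℝ) 1) → ‖z x‖ ≤ 1)
    (ε : ℝ) (hε : 0 < ε) :
    ∃ (N : ℕ) (ω : Fin N → Fin m → ℝ) (α φ : Fin N → ℝ),
      ∀ x : Fin m → ℝ, (∀ i, x i ∈ Set.Icc (0 : ℝ) 1) →
        ‖z x - (prodRev fun j => Uuat x (ω j) (α j) (φ j)) 1 0‖ < ε := by
  obtain ⟨δ, hδ0, hδ⟩ : ∃ δ : ℝ, 0 < δ ∧ δ < min 1 (ε / 2) := exists_between (by positivity)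
  obtain ⟨hδ1, hδε⟩ := lt_min_iff.1 hδ
  have hcube (x : Cube m) : ‖z x‖ ≤ 1 := hbound x fun i => ⟨x.2.1 i, x.2.2 i⟩
  -- Shrinking `z` by `1 - δ` moves its values into the open disc.
  let w : C(Cube m, ℂ) := ⟨fun x => (1 - δ : ℝ) * z x, by fun_prop⟩
  have hw (x : Cube m) : ‖w x‖ < 1 := by
    have : ‖w x‖ = (1 - δ) * ‖z x‖ := by
      simp only [w, ContinuousMap.coe_mk, norm_mul, Complex.norm_real]
      rw [Real.norm_of_nonneg (by linarith)]
    rw [this]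
    nlinarith [hcube x, norm_nonneg (z x)]
  obtain ⟨F, hF, hFw⟩ := exists_circuit_entry w hw
  let e : C(Quaternion ℝ, ℂ) := ⟨fun q => rho q 1 0, continuous_rho_entry⟩
  have hcl : e.comp F ∈ closure ((fun G : C(Cube m, Quaternion ℝ) => e.comp G) ''
      (Submonoid.closure (Set.range (gate (m := m))) : Set C(Cube m, Quaternion ℝ))) :=
    image_closure_subset_closure_image e.continuous_postcomp ⟨F, hF, rfl⟩
  obtain ⟨_, ⟨G, hG, rfl⟩, hdist⟩ := Metric.mem_closure_iff.1 hcl (ε / 2) (by positivity)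
  obtain ⟨N, ω, α, φ, h⟩ := exists_of_mem_closure hG
  refine ⟨N, ω, α, φ, fun x hx => ?_⟩
  let y : Cube m := ⟨x, fun i => (hx i).1, fun i => (hx i).2⟩
  rw [← h y]
  have h1 : ‖w y - rho (G y) 1 0‖ < ε / 2 := by
    rw [← hFw y, ← dist_eq_norm]
    exact (ContinuousMap.dist_apply_le_dist y).trans_lt hdist
  have h2 : ‖z x - w y‖ ≤ δ := by
    have : z x - w y = (δ : ℝ) * z x := by simp [w, y]; ring
    rw [this, norm_mul, Complex.norm_real, Real.norm_of_nonneg hδ0.le]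
    nlinarith [hcube y]
  calc _ = ‖(z x - w y) + (w y - rho (G y) 1 0)‖ := by congr 1; ring
    _ ≤ _ := norm_add_le _ _
    _ < ε := by linarith
end

section
/- For every m ≥ 1, every continuous function f : ℝ^m → ℂ, and every ε > 0, there exist N ∈ ℕ, coefficients α_1, …, α_N ∈ ℂ, weights w_1, …, w_N ∈ ℝ^m and biases b_1, …, b_N ∈ ℝ such that for every x ∈ I_m, ‖f(x) − Σ_{n=1}^N α_n · exp(i(w_n·x + b_n))‖ < ε. -/
/-!
The plane waves `x ↦ exp(i w·x)`, restricted to the compact cube, contain `1` and are closed under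
products (`w + w'`) and conjugation (`-w`). Hence their linear span is already the star-subalgebra
they generate. It separates points: if `x j ≠ y j`, the wave with `w = e_j` distinguishes `x` from
`y`, because `|x j - y j| ≤ 1 < 2π`. The Stone–Weierstrass theorem then gives density of the span,
and the approximation holds with all biases equal to `0`.
-/

/-- The plane wave `x ↦ exp(i w·x)` as a continuous function on the cube `[0,1]^m`, the latter being
an order interval of `Fin m → ℝ`. -/
noncomputable def planeWave {m : ℕ} (w : Fin m → ℝ) : C(Set.Icc (0 : Fin m → ℝ) 1, ℂ) where
  toFun x := Complex.exp (Complex.I * ((∑ i, w i * x.1 i : ℝ) : ℂ))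
  continuous_toFun := by
    refine Complex.continuous_exp.comp (continuous_const.mul (Complex.continuous_ofReal.comp ?_))
    exact continuous_finsetSum _ fun i _ =>
      continuous_const.mul ((continuous_apply i).comp continuous_subtype_val)

lemma planeWave_zero {m : ℕ} : planeWave (0 : Fin m → ℝ) = 1 := by
  ext x; simp [planeWave]

lemma planeWave_add {m : ℕ} (v w : Fin m → ℝ) :
    planeWave (v + w) = planeWave v * planeWave w := by
  ext x
  simp [planeWave, ← Complex.exp_add, ← mul_add, ← Finset.sum_add_distrib, add_mul]

lemma star_planeWave {m : ℕ} (w : Fin m → ℝ) : star (planeWave w) = planeWave (-w) := by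
  ext x
  simp [planeWave, ← Complex.exp_conj]

/-- The plane waves form a submonoid of `C([0,1]^m, ℂ)`, so that the algebra they generate is their
linear span. -/
noncomputable def planeWaves (m : ℕ) : Submonoid C(Set.Icc (0 : Fin m → ℝ) 1, ℂ) where
  carrier := Set.range planeWave
  one_mem' := ⟨0, planeWave_zero⟩
  mul_mem' := by
    rintro _ _ ⟨v, rfl⟩ ⟨w, rfl⟩
    exact ⟨v + w, planeWave_add v w⟩

/-- The star-subalgebra of trigonometric sums on the cube. -/
noncomputable def waveAlgebra (m : ℕ) : StarSubalgebra ℂ C(Set.Icc (0 : Fin m → ℝ) 1, ℂ) :=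
  StarAlgebra.adjoin ℂ (planeWaves m : Set C(Set.Icc (0 : Fin m → ℝ) 1, ℂ))

lemma mem_waveAlgebra {m : ℕ} {g : C(Set.Icc (0 : Fin m → ℝ) 1, ℂ)} (hg : g ∈ waveAlgebra m) :
    g ∈ Submodule.span ℂ (planeWaves m : Set C(Set.Icc (0 : Fin m → ℝ) 1, ℂ)) := by
  have hstar : star (planeWaves m : Set C(Set.Icc (0 : Fin m → ℝ) 1, ℂ)) ⊆ planeWaves m := by
    rintro h ⟨w, hw⟩
    exact ⟨-w, by rw [← star_planeWave, hw, star_star]⟩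
  rw [waveAlgebra, ← StarSubalgebra.mem_toSubalgebra, StarAlgebra.adjoin_toSubalgebra,
    Set.union_eq_self_of_subset_right hstar, ← Subalgebra.mem_toSubmodule,
    Algebra.adjoin_eq_span, Submonoid.closure_eq] at hg
  exact hg

lemma waveAlgebra_separatesPoints (m : ℕ) : (waveAlgebra m).SeparatesPoints := by
  intro x y hxy
  obtain ⟨j, hj⟩ : ∃ j, x.1 j ≠ y.1 j := by
    by_contra! h
    exact hxy (Subtype.ext (funext h))
  refine ⟨_, ⟨planeWave (Pi.single j 1),
    StarAlgebra.subset_adjoin ℂ _ ⟨_, rfl⟩, rfl⟩, fun h => hj ?_⟩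
  have hx0 := x.2.1 j
  have hx1 := x.2.2 j
  have hy0 := y.2.1 j
  have hy1 := y.2.2 j
  simp only [Pi.zero_apply, Pi.one_apply] at hx0 hx1 hy0 hy1
  have hexp : Complex.exp (Complex.I * (x.1 j : ℂ)) = Complex.exp (Complex.I * (y.1 j : ℂ)) := by
    simpa [planeWave, Pi.single_apply] using h
  -- Both exponents have imaginary part in `(-π, π]`, where `exp` is injective.
  have hpi := Real.pi_gt_three
  have := Complex.exp_inj_of_neg_pi_lt_of_le_pi (by simp; linarith) (by simp; linarith)
    (by simp; linarith) (by simp; linarith) hexp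
  simpa using this

/-- **Universal Approximation Theorem for the activation `σ(u) = e^{iu}`.**
Every continuous `f : ℝ^m → ℂ` can be uniformly approximated on the cube `I_m = [0,1]^m`
by finite sums `Σ_n α_n · exp(i(w_n·x + b_n))`. -/
theorem complex_UAT (m : ℕ) (hm : 1 ≤ m) (f : (Fin m → ℝ) → ℂ) (hf : Continuous f)
    (ε : ℝ) (hε : 0 < ε) :
    ∃ (N : ℕ) (α : Fin N → ℂ) (w : Fin N → Fin m → ℝ) (b : Fin N → ℝ),
      ∀ x : Fin m → ℝ, (∀ i, x i ∈ Set.Icc (0 : ℝ) 1) →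
        ‖f x - ∑ n, α n * Complex.exp (Complex.I * (((∑ i, w n i * x i) + b n : ℝ) : ℂ))‖ < ε := by
  let F : C(Set.Icc (0 : Fin m → ℝ) 1, ℂ) := ⟨fun x => f x.1, by fun_prop⟩
  have hF : F ∈ (waveAlgebra m).topologicalClosure := by
    rw [ContinuousMap.starSubalgebra_topologicalClosure_eq_top_of_separatesPoints _
      (waveAlgebra_separatesPoints m)]
    trivial
  have hF' : F ∈ closure (waveAlgebra m : Set C(Set.Icc (0 : Fin m → ℝ) 1, ℂ)) := hF
  obtain ⟨g, hg, hFg⟩ := Metric.mem_closure_iff.1 hF' ε hε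
  obtain ⟨N, α, φ, rfl⟩ := Submodule.mem_span_set'.1 (mem_waveAlgebra hg)
  choose w hw using fun n => (φ n).2
  refine ⟨N, α, w, 0, fun x hx => ?_⟩
  have hlt := (ContinuousMap.dist_apply_le_dist
    (⟨x, fun i => (hx i).1, fun i => (hx i).2⟩ : Set.Icc (0 : Fin m → ℝ) 1)).trans_lt hFg
  rw [dist_eq_norm] at hlt
  simpa [F, ← hw, planeWave, ContinuousMap.sum_apply] using hlt
end

section
/- For all real x, ω, α, β, φ, λ, setting a₊ = cos λ · cos φ · e^{iα}, a₋ = −sin λ · sin φ · e^{iβ}, b₊ = −cos λ · sin φ · e^{iα}, b₋ = −sin λ · cos φ · e^{iβ}, the fundamental Fourier gate U^F(x; ω, α, β, φ, λ) equals the 2×2 complex matrix with first row [a₊ e^{iωx} + a₋ e^{−iωx}, b₊ e^{iωx} + b₋ e^{−iωx}] and second row [−conj(b₋) e^{iωx} − conj(b₊) e^{−iωx}, conj(a₋) e^{iωx} + conj(a₊) e^{−iωx}]. -/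
/-!
The four leftmost rotations multiply to a matrix whose entries are `cos λ` or `± sin λ` times a
pure phase: placing `R_y(2λ)` between `R_z(α + β)` and `R_z(α - β)` puts `e^{±iα}` on the diagonal
and `e^{±iβ}` off it, and `R_z(2ωx)` scales the columns by `e^{±iωx}`
(`Rz_mul_Ry_mul_Rz_mul_Rz`). Multiplying by `R_y(2φ)` mixes the two columns with real weights
`cos φ`, `± sin φ`, and the second row acquires the conjugate coefficients because conjugation
inverts phases.
-/

open scoped Matrix

/-- The fundamental Fourier gate
`U^F(x; ω, α, β, φ, λ) = R_z(α+β) · R_y(2λ) · R_z(α−β) · R_z(2ωx) · R_y(2φ)`. -/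
noncomputable def UF (x ω α β φ l : ℝ) : Matrix (Fin 2) (Fin 2) ℂ :=
  Rz (α + β) * Ry (2 * l) * Rz (α - β) * Rz (2 * ω * x) * Ry (2 * φ)

/-- The part of the gate to the left of `R_y(2φ)`: each diagonal rotation multiplies a row or a
column by a phase, so the half-angles recombine to `±α` on the diagonal and `±β` off it. -/
theorem Rz_mul_Ry_mul_Rz_mul_Rz (x ω α β l : ℝ) :
    Rz (α + β) * Ry (2 * l) * Rz (α - β) * Rz (2 * ω * x) =
      !![Real.cos l * (Complex.exp (Complex.I * α) * Complex.exp (Complex.I * (ω * x))),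
         -(Real.sin l * (Complex.exp (Complex.I * β) * Complex.exp (-(Complex.I * (ω * x)))));
         Real.sin l * (Complex.exp (-(Complex.I * β)) * Complex.exp (Complex.I * (ω * x))),
         Real.cos l *
           (Complex.exp (-(Complex.I * α)) * Complex.exp (-(Complex.I * (ω * x))))] := by
  have hl : 2 * l / 2 = l := by ring
  -- In each entry the product of three phases is one exponential, up to the order of factors.
  have key : ∀ a b c d e r : ℂ, a + b + c = d + e →
      Complex.exp a * r * Complex.exp b * Complex.exp c =
        r * (Complex.exp d * Complex.exp e) := by
    intro a b c d e r h
    rw [← Complex.exp_add d e, ← h, Complex.exp_add, Complex.exp_add]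
    ring
  simp only [Rz, Ry, hl, Matrix.mul_fin_two, mul_zero, zero_mul, add_zero, zero_add, mul_neg,
    neg_mul, neg_zero]
  rw [key _ _ _ (Complex.I * α) (Complex.I * (ω * x)),
    key _ _ _ (Complex.I * β) (-(Complex.I * (ω * x))),
    key _ _ _ (-(Complex.I * β)) (Complex.I * (ω * x)),
    key _ _ _ (-(Complex.I * α)) (-(Complex.I * (ω * x)))]
  all_goals push_cast; ring

/-- Closed form of the fundamental Fourier gate in terms of the coefficients
`a₊, a₋, b₊, b₋`. -/
theorem UF_closed_form (x ω α β φ l : ℝ) (ap am bp bm : ℂ)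
    (hap : ap = Real.cos l * Real.cos φ * Complex.exp (Complex.I * α))
    (ham : am = -(Real.sin l * Real.sin φ * Complex.exp (Complex.I * β)))
    (hbp : bp = -(Real.cos l * Real.sin φ * Complex.exp (Complex.I * α)))
    (hbm : bm = -(Real.sin l * Real.cos φ * Complex.exp (Complex.I * β))) :
    UF x ω α β φ l =
      !![ap * Complex.exp (Complex.I * (ω * x)) + am * Complex.exp (-(Complex.I * (ω * x))),
         bp * Complex.exp (Complex.I * (ω * x)) + bm * Complex.exp (-(Complex.I * (ω * x)));
         -(starRingEnd ℂ) bm * Complex.exp (Complex.I * (ω * x)) -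
           (starRingEnd ℂ) bp * Complex.exp (-(Complex.I * (ω * x))),
         (starRingEnd ℂ) am * Complex.exp (Complex.I * (ω * x)) +
           (starRingEnd ℂ) ap * Complex.exp (-(Complex.I * (ω * x)))] := by
  have hφ : 2 * φ / 2 = φ := by ring
  have hconj : ∀ t : ℝ, (starRingEnd ℂ) (Complex.exp (Complex.I * t)) =
      Complex.exp (-(Complex.I * t)) := by
    intro t
    rw [← Complex.exp_conj, map_mul, Complex.conj_I, Complex.conj_ofReal, neg_mul]
  subst hap ham hbp hbm
  rw [UF, Rz_mul_Ry_mul_Rz_mul_Rz, Ry, hφ, Matrix.mul_fin_two]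
  simp only [map_neg, map_mul, hconj, Complex.conj_ofReal]
  congr! 3 <;> ring_nf
end

section
/- Let N ≥ 1 and let ω_1, …, ω_N, α_1, …, α_N, β_1, …, β_N, φ_1, …, φ_N, λ_1, …, λ_N be real parameters. Then there exists a function c : {−1, 1}^N → ℂ (independent of x) such that for every x ∈ ℝ, ⟨1| U^F(x; ω_N, α_N, β_N, φ_N, λ_N) · ⋯ · U^F(x; ω_1, α_1, β_1, φ_1, λ_1) |0⟩ = Σ_{ε ∈ {−1,1}^N} c(ε) · exp(i · (Σ_{j=1}^N ε_j ω_j) · x). -/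
/-!
Only `R_z(2ωx)` depends on `x`, and it is `e^{iωx} E₀₀ + e^{-iωx} E₁₁` with the diagonal matrix
units. So each gate is `∑ b, e^{i sgn(b) ω x} A b` with `x`-independent matrices `A b`
(`UF_eq_sum`). Expanding the ordered product of these two-term sums (`prodRev_sum`) and collecting
the scalars (`prodRev_smul`) gives one `x`-independent matrix, `A_N (ε_N) ⋯ A_1 (ε_1)`, for each
sign vector `ε`, multiplied by `∏ j, e^{i ε_j ω_j x} = e^{i (∑ j, ε_j ω_j) x}`; `c ε` is its
`(1, 0)` entry.
-/

open scoped Matrix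

/-- A sign `ε ∈ {−1, 1}` encoded by a boolean. -/
def sgn (b : Bool) : ℝ := if b then 1 else -1

theorem prodRev_succ {n : ℕ} (f : Fin (n + 1) → Matrix (Fin 2) (Fin 2) ℂ) :
    prodRev f = prodRev (fun j => f j.succ) * f 0 := by
  rw [prodRev, List.ofFn_succ']
  simp only [Fin.rev_castSucc, Fin.rev_last, List.prod_concat, prodRev]

/-- Distributivity for the ordered (noncommutative) product: a product of sums over `b` is a sum
over all choice functions `ε`. -/
theorem prodRev_sum {n : ℕ} (g : Fin n → Bool → Matrix (Fin 2) (Fin 2) ℂ) :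
    (prodRev fun j => ∑ b, g j b) = ∑ ε : Fin n → Bool, prodRev fun j => g j (ε j) := by
  induction n with
  | zero => simp [prodRev]
  | succ n ih =>
    rw [prodRev_succ, ih, ← (Fin.consEquiv fun _ => Bool).sum_comp, Fintype.sum_prod_type,
      Finset.mul_sum]
    refine Finset.sum_congr rfl fun b _ => ?_
    rw [Finset.sum_mul]
    refine Finset.sum_congr rfl fun ε _ => ?_
    simp [prodRev_succ, Fin.consEquiv]

theorem prodRev_smul {n : ℕ} (a : Fin n → ℂ) (A : Fin n → Matrix (Fin 2) (Fin 2) ℂ) :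
    (prodRev fun j => a j • A j) = (∏ j, a j) • prodRev A := by
  induction n with
  | zero => simp [prodRev]
  | succ n ih =>
    rw [prodRev_succ, ih, prodRev_succ A, Fin.prod_univ_succ, smul_mul_smul_comm, mul_comm (a 0)]

/-- The coefficient of `e^{i sgn(b) ω x}` in the gate `UF x ω α β φ l`: the factor `Rz (2 * ω * x)`
is replaced by the diagonal matrix unit carrying that exponential. -/
noncomputable def UFcoeff (α β φ l : ℝ) (b : Bool) : Matrix (Fin 2) (Fin 2) ℂ :=
  Rz (α + β) * Ry (2 * l) * Rz (α - β) *
    (if b then !![1, 0; 0, 0] else !![0, 0; 0, 1]) * Ry (2 * φ)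

theorem UF_eq_sum (x ω α β φ l : ℝ) :
    UF x ω α β φ l =
      ∑ b, Complex.exp (Complex.I * ((sgn b * ω * x : ℝ) : ℂ)) • UFcoeff α β φ l b := by
  have h : Rz (2 * ω * x) =
      Complex.exp (Complex.I * ((sgn true * ω * x : ℝ) : ℂ)) • !![1, 0; 0, 0] +
      Complex.exp (Complex.I * ((sgn false * ω * x : ℝ) : ℂ)) • !![0, 0; 0, 1] := by
    have e : (2 * (ω : ℂ) * x) / 2 = ω * x := by ring
    simp [Rz, sgn, e]
  rw [UF, h, Fintype.sum_bool]
  simp only [UFcoeff, mul_add, add_mul, mul_smul_comm, smul_mul_assoc, if_true, if_false,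
    Bool.false_eq_true]

/-- The `⟨1|·|0⟩` entry of an `N`-gate Fourier circuit is an exponential sum with
frequencies `Σ_j ε_j ω_j` over all sign choices `ε ∈ {−1,1}^N`, with `x`-independent
coefficients. -/
theorem UF_circuit_exp_sum (N : ℕ) (hN : 1 ≤ N) (ω α β φ l : Fin N → ℝ) :
    ∃ c : (Fin N → Bool) → ℂ,
      ∀ x : ℝ,
        (prodRev fun j => UF x (ω j) (α j) (β j) (φ j) (l j)) 1 0 =
          ∑ ε : Fin N → Bool,
            c ε * Complex.exp (Complex.I * (((∑ j, sgn (ε j) * ω j) * x : ℝ) : ℂ)) := by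
  refine ⟨fun ε => (prodRev fun j => UFcoeff (α j) (β j) (φ j) (l j) (ε j)) 1 0, fun x => ?_⟩
  simp_rw [UF_eq_sum, prodRev_sum, prodRev_smul, Matrix.sum_apply, Matrix.smul_apply, smul_eq_mul]
  refine Finset.sum_congr rfl fun ε _ => ?_
  rw [← Complex.exp_sum, mul_comm, ← Finset.mul_sum, ← Complex.ofReal_sum, ← Finset.sum_mul]
end

section
/- Let S ⊂ ℝ be a finite set with S = −S, let A, B : S → ℂ, and let M : ℝ → (2×2 complex matrices) satisfy, for all x ∈ ℝ: M(x)₀₀ = Σ_{s∈S} A(s) e^{isx}, M(x)₀₁ = Σ_{s∈S} B(s) e^{isx}, M(x)₁₀ = −Σ_{s∈S} conj(B(s)) e^{−isx}, and M(x)₁₁ = Σ_{s∈S} conj(A(s)) e^{−isx}. Then for all real ω, α, β, φ, λ there exist A′, B′ : S′ → ℂ, where S′ = {s + ω : s ∈ S} ∪ {s − ω : s ∈ S}, such that the product x ↦ U^F(x; ω, α, β, φ, λ) · M(x) satisfies the same four identities with S′, A′, B′ in place of S, A, B. -/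
/-!
Both the gate and `M x` have the quaternionic shape `!![p, q; -conj q, conj p]`, and this shape is
stable under multiplication (`IsQuaternionic.mul`). Hence the bottom row of the product is
determined by its top row, and it suffices to expand the top row as trigonometric polynomials over
`S' = (S + ω) ∪ (S - ω)`. The top row of the gate consists of combinations of `exp (± I * ω * x)`
(`UF_top_row`), whose product with a trigonometric polynomial over `S` is one over `S'`
(`IsTrigPoly.mul_shift`). The bottom row of `M x` also contributes; its entries are, up to sign,
conjugates of trigonometric polynomials over `S`, and these are again trigonometric polynomials
over `S` because `S = -S` (`IsTrigPoly.conj`).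
-/

open scoped Matrix

/-- Matrices of the form `!![p, q; -conj q, conj p]`, the usual complex model of the quaternions. -/
def IsQuaternionic (U : Matrix (Fin 2) (Fin 2) ℂ) : Prop :=
  U 1 0 = -(starRingEnd ℂ) (U 0 1) ∧ U 1 1 = (starRingEnd ℂ) (U 0 0)

lemma IsQuaternionic.mul {U V : Matrix (Fin 2) (Fin 2) ℂ} (hU : IsQuaternionic U)
    (hV : IsQuaternionic V) : IsQuaternionic (U * V) := by
  obtain ⟨hU0, hU1⟩ := hU
  obtain ⟨hV0, hV1⟩ := hV
  constructor <;> simp only [Matrix.mul_apply, Fin.sum_univ_two, hU0, hU1, hV0, hV1, map_add,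
    map_mul, map_neg, Complex.conj_conj] <;> ring

lemma isQuaternionic_Ry (θ : ℝ) : IsQuaternionic (Ry θ) := by
  constructor <;> simp only [Ry, Matrix.of_apply, Matrix.cons_val', Matrix.cons_val_zero,
    Matrix.cons_val_one, Matrix.cons_val_fin_one, map_neg, Complex.conj_ofReal, neg_neg]

lemma isQuaternionic_Rz (θ : ℝ) : IsQuaternionic (Rz θ) := by
  constructor
  · simp [Rz]
  · have h : (starRingEnd ℂ) 2 = 2 := Complex.conj_ofNat 2
    simp [Rz, ← Complex.exp_conj, h]

lemma isQuaternionic_UF (x ω α β φ l : ℝ) : IsQuaternionic (UF x ω α β φ l) :=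
  ((((isQuaternionic_Rz _).mul (isQuaternionic_Ry _)).mul (isQuaternionic_Rz _)).mul
    (isQuaternionic_Rz _)).mul (isQuaternionic_Ry _)

/-- The dependence of the top row of the gate on `x`: only the frequencies `ω` and `-ω` occur. -/
lemma UF_top_row (ω α β φ l : ℝ) (j : Fin 2) : ∃ a b : ℂ, ∀ x : ℝ,
    UF x ω α β φ l 0 j =
      a * Complex.exp (Complex.I * (ω * x)) + b * Complex.exp (-(Complex.I * (ω * x))) := by
  refine ⟨(Rz (α + β) * Ry (2 * l) * Rz (α - β)) 0 0 * Ry (2 * φ) 0 j,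
    (Rz (α + β) * Ry (2 * l) * Rz (α - β)) 0 1 * Ry (2 * φ) 1 j, fun x => ?_⟩
  have h : (2 * (ω : ℂ) * x) / 2 = ω * x := by ring
  rw [UF, Matrix.mul_apply, Fin.sum_univ_two, Matrix.mul_apply, Matrix.mul_apply,
    Fin.sum_univ_two, Fin.sum_univ_two]
  generalize Rz (α + β) * Ry (2 * l) * Rz (α - β) = W
  generalize Ry (2 * φ) = R
  simp [Rz, h]
  ring

/-- `f` is a trigonometric polynomial with frequencies in `T`. -/
def IsTrigPoly (T : Finset ℝ) (f : ℝ → ℂ) : Prop :=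
  ∃ A : ℝ → ℂ, ∀ x : ℝ, f x = ∑ s ∈ T, A s * Complex.exp (Complex.I * (s * x))

namespace IsTrigPoly

variable {T T' : Finset ℝ} {f g : ℝ → ℂ}

lemma add (hf : IsTrigPoly T f) (hg : IsTrigPoly T g) : IsTrigPoly T (fun x => f x + g x) := by
  obtain ⟨A, hA⟩ := hf
  obtain ⟨B, hB⟩ := hg
  exact ⟨fun s => A s + B s, fun x => by simp only [hA, hB, add_mul, Finset.sum_add_distrib]⟩

lemma const_mul (c : ℂ) (hf : IsTrigPoly T f) : IsTrigPoly T (fun x => c * f x) := by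
  obtain ⟨A, hA⟩ := hf
  exact ⟨fun s => c * A s, fun x => by simp only [hA, Finset.mul_sum, mul_assoc]⟩

lemma mono (h : T ⊆ T') (hf : IsTrigPoly T f) : IsTrigPoly T' f := by
  classical
  obtain ⟨A, hA⟩ := hf
  refine ⟨fun s => if s ∈ T then A s else 0, fun x => ?_⟩
  rw [hA, ← Finset.sum_subset h]
  · exact Finset.sum_congr rfl fun s hs => by simp [hs]
  · intro s _ hs
    simp [hs]

lemma mul_exp (ω : ℝ) (hf : IsTrigPoly T f) :
    IsTrigPoly (T.image (· + ω)) (fun x => Complex.exp (Complex.I * (ω * x)) * f x) := by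
  obtain ⟨A, hA⟩ := hf
  refine ⟨fun s => A (s - ω), fun x => ?_⟩
  beta_reduce
  rw [Finset.sum_image fun _ _ _ _ h => add_right_cancel h, hA, Finset.mul_sum]
  refine Finset.sum_congr rfl fun s _ => ?_
  rw [add_sub_cancel_right, mul_left_comm, ← Complex.exp_add]
  push_cast
  ring_nf

/-- The conjugate of a trigonometric polynomial has the opposite frequencies, so a symmetric
frequency set is preserved. -/
lemma conj (hT : ∀ s ∈ T, -s ∈ T) (hf : IsTrigPoly T f) :
    IsTrigPoly T (fun x => (starRingEnd ℂ) (f x)) := by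
  obtain ⟨A, hA⟩ := hf
  refine ⟨fun s => (starRingEnd ℂ) (A (-s)), fun x => ?_⟩
  beta_reduce
  rw [hA, map_sum]
  refine Finset.sum_bij' (fun s _ => -s) (fun s _ => -s) hT hT (by simp) (by simp) fun s _ => ?_
  simp [← Complex.exp_conj]

lemma mul_shift (ω : ℝ) (a b : ℂ) (hf : IsTrigPoly T f) :
    IsTrigPoly (T.image (· + ω) ∪ T.image (· - ω)) (fun x =>
      (a * Complex.exp (Complex.I * (ω * x)) + b * Complex.exp (-(Complex.I * (ω * x)))) * f x) := by
  have h₁ := ((hf.mul_exp ω).const_mul a).mono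
    (Finset.subset_union_left (s₂ := T.image (· - ω)))
  have h₂ := ((hf.mul_exp (-ω)).const_mul b).mono
    (Finset.subset_union_right (s₁ := T.image (· + ω)))
  convert h₁.add h₂ using 2 with x
  push_cast
  ring_nf

end IsTrigPoly

/-- Conjugation of a trigonometric sum, in the form in which the bottom rows are written. -/
lemma conj_trig_sum (T : Finset ℝ) (A : ℝ → ℂ) (x : ℝ) :
    (starRingEnd ℂ) (∑ s ∈ T, A s * Complex.exp (Complex.I * (s * x))) =
      ∑ s ∈ T, (starRingEnd ℂ) (A s) * Complex.exp (-(Complex.I * (s * x))) := by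
  simp [← Complex.exp_conj]

/-- Induction step: appending one fundamental Fourier gate to a circuit whose entries are
trigonometric polynomials over a symmetric frequency set `S` produces a circuit of the same
form over the shifted frequency set `S' = (S + ω) ∪ (S − ω)`. -/
theorem UF_induction_step (S : Finset ℝ) (hS : ∀ s ∈ S, -s ∈ S) (A B : ℝ → ℂ)
    (M : ℝ → Matrix (Fin 2) (Fin 2) ℂ)
    (h00 : ∀ x : ℝ, M x 0 0 = ∑ s ∈ S, A s * Complex.exp (Complex.I * (s * x)))
    (h01 : ∀ x : ℝ, M x 0 1 = ∑ s ∈ S, B s * Complex.exp (Complex.I * (s * x)))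
    (h10 : ∀ x : ℝ, M x 1 0 =
      -∑ s ∈ S, (starRingEnd ℂ) (B s) * Complex.exp (-(Complex.I * (s * x))))
    (h11 : ∀ x : ℝ, M x 1 1 =
      ∑ s ∈ S, (starRingEnd ℂ) (A s) * Complex.exp (-(Complex.I * (s * x))))
    (ω α β φ l : ℝ) :
    ∃ A' B' : ℝ → ℂ,
      (∀ x : ℝ, (UF x ω α β φ l * M x) 0 0 =
        ∑ s ∈ S.image (· + ω) ∪ S.image (· - ω),
          A' s * Complex.exp (Complex.I * (s * x))) ∧
      (∀ x : ℝ, (UF x ω α β φ l * M x) 0 1 =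
        ∑ s ∈ S.image (· + ω) ∪ S.image (· - ω),
          B' s * Complex.exp (Complex.I * (s * x))) ∧
      (∀ x : ℝ, (UF x ω α β φ l * M x) 1 0 =
        -∑ s ∈ S.image (· + ω) ∪ S.image (· - ω),
          (starRingEnd ℂ) (B' s) * Complex.exp (-(Complex.I * (s * x)))) ∧
      (∀ x : ℝ, (UF x ω α β φ l * M x) 1 1 =
        ∑ s ∈ S.image (· + ω) ∪ S.image (· - ω),
          (starRingEnd ℂ) (A' s) * Complex.exp (-(Complex.I * (s * x)))) := by
  have hM : ∀ x, IsQuaternionic (M x) := fun x =>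
    ⟨by rw [h10, h01, conj_trig_sum], by rw [h11, h00, conj_trig_sum]⟩
  have t00 : IsTrigPoly S (fun x => M x 0 0) := ⟨A, h00⟩
  have t01 : IsTrigPoly S (fun x => M x 0 1) := ⟨B, h01⟩
  have t10 : IsTrigPoly S (fun x => M x 1 0) := by
    have h := (t01.conj hS).const_mul (-1)
    simpa only [neg_one_mul, ← (hM _).1] using h
  have t11 : IsTrigPoly S (fun x => M x 1 1) := by
    have h := t00.conj hS
    simpa only [← (hM _).2] using h
  obtain ⟨a, b, hp⟩ := UF_top_row ω α β φ l 0
  obtain ⟨c, d, hq⟩ := UF_top_row ω α β φ l 1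
  obtain ⟨A', hA'⟩ := (t00.mul_shift ω a b).add (t10.mul_shift ω c d)
  obtain ⟨B', hB'⟩ := (t01.mul_shift ω a b).add (t11.mul_shift ω c d)
  have e00 := fun x => (show (UF x ω α β φ l * M x) 0 0 = _ by
    rw [Matrix.mul_apply, Fin.sum_univ_two, hp, hq]).trans (hA' x)
  have e01 := fun x => (show (UF x ω α β φ l * M x) 0 1 = _ by
    rw [Matrix.mul_apply, Fin.sum_univ_two, hp, hq]).trans (hB' x)
  have hQ := fun x => (isQuaternionic_UF x ω α β φ l).mul (hM x)
  exact ⟨A', B', e00, e01,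
    fun x => by rw [(hQ x).1, e01, conj_trig_sum],
    fun x => by rw [(hQ x).2, e00, conj_trig_sum]⟩
end
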